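/- Let α ∈ (0,1) be irrational with continued fraction expansion α = [a_1,a_2,a_3,...], and suppose limsup_{n→∞} a_n ≠ 2. Then for every λ ∈ ℝ with λ ≠ 0, every θ ∈ [0,1), and every E ∈ ℂ, the only square-summable function u : ℤ → ℂ satisfying u(n+1) + u(n−1) + λ v_{α,θ}(n) u(n) = E u(n) for all n ∈ ℤ is u ≡ 0. Equivalently, the operator H_{λ,α,θ} has empty point spectrum. -/

import Mathlib

/-!
The proof is Gordon's two-block argument. If the potential repeats a block of length `q` immediately
to the right (or to the left) of a site `c`, Cayley–Hamilton for the transfer matrix `B` of the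
block gives `u (c + 2q) + u c = tr B * u (c + q)`, and likewise at `c - 1` (`two_block`). When this
happens for infinitely many `q` and the traces stay bounded, a square-summable `u` vanishes at `c`
and `c - 1`, hence everywhere (`eq_zero_of_frequently_good`).

Repetitions. With `q n` the denominators of the convergents of `α`, the `q n`-periodicity of the
Sturmian potential breaks only at the sites `t` where `t α + θ` is so close to an integer that adding
`q n α - p n` crosses it. These sites are called hits (`Hit`). By best approximation distinct hits of
level `n` are at least `q (n+1)` apart (`Conv.hit_gap`), so a level at which `q (n+1) > 3 q n` is
good for every site (`Conv.good_of_three_le`); there are infinitely many such levels when infinitely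
many partial quotients are at least three. If the limsup is neither `2` nor larger, the partial
quotients are eventually one. Choosing `c` with `c α + θ` not an integer, `c` is eventually never a
hit, and hits of level `n + 1` determine those of level `n` (`Conv.hit_down`); if three consecutive
levels were bad, the distance between the hits on the two sides of `c` would become too large
(`Conv.good_of_one`).

Traces. The trace over a window of length `q n` which does not start at a hit equals the trace
for phase zero (`Conv.trace_window`), and the matrices of phase zero satisfy
`M (n+2) = M n * M (n+1) ^ a n` (`Conv.tm_rec`). Along this recursion either the traces are bounded,
because of the Fricke–Vogt invariant (`trace_bounded`), or they escape: from some level on, all of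
them exceed two in modulus (`Escapes.two_lt`). Escape is an open condition on the energy. On the other
hand, cutting `u` to a long window and closing the window to a cycle gives an approximate
eigenvector of a symmetric matrix, hence energies arbitrarily near `E` whose trace over a long
period is exactly `2` (`exists_energy_near`). So the traces do not escape at an eigenvalue
(`trace_bounded_of_eigenvalue`).
-/

/-- Partial quotients of the continued fraction expansion of `α ∈ (0,1)`:
`cfa α n = a_n` for `n ≥ 1`, computed via the Gauss map. -/
noncomputable def cfa (α : ℝ) (n : ℕ) : ℕ :=
  ⌊((fun x : ℝ => Int.fract x⁻¹)^[n - 1] α)⁻¹⌋₊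

/-- The standard Sturmian words, with index shifted by one:
`sw α (n+1)` is the word `s_n` of the paper (so `sw α 0 = s₋₁ = 1`, `sw α 1 = s₀ = 0`,
`sw α 2 = s₁ = s₀^(a₁-1) s₋₁`, and `s_n = s_{n-1}^{a_n} s_{n-2}` for `n ≥ 2`).
The letter `1` is encoded by `true` and `0` by `false`. -/
noncomputable def sw (α : ℝ) : ℕ → List Bool
  | 0 => [true]
  | 1 => [false]
  | 2 => (List.replicate (cfa α 1 - 1) [false]).flatten ++ [true]
  | n + 3 => (List.replicate (cfa α (n + 2)) (sw α (n + 2))).flatten ++ sw α (n + 1)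

/-- Denominators of the rational approximants: `q₀ = 1`, `q₁ = a₁`, `qₙ = aₙ q_{n-1} + q_{n-2}`. -/
noncomputable def qden (α : ℝ) : ℕ → ℕ
  | 0 => 1
  | 1 => cfa α 1
  | n + 2 => cfa α (n + 2) * qden α (n + 1) + qden α n

open scoped Classical in
/-- The Sturmian potential `v_{α,θ}(n) = χ_{[1-α,1)}(nα + θ mod 1)`, with value `1`
encoded by `true` and `0` by `false` (note `Int.fract x < 1` always). -/
noncomputable def sturmian (α θ : ℝ) (n : ℤ) : Bool :=
  if 1 - α ≤ Int.fract ((n : ℝ) * α + θ) then true else false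

/-- An `(n,α)`-partition of a two-sided sequence `f : ℤ → Bool`, given by the
break points `d : ℤ → ℤ` (interval `I_j = {d j, …, d (j+1) - 1}`) and blocks
`z : ℤ → List Bool`: the `d j` are strictly increasing, `0 ∈ I₀`, each block is
`s_n = sw α (n+1)` or `s_{n-1} = sw α n`, consecutive intervals are adjacent with
`I_j` of length `(z j).length`, and `f` restricted to `I_j` spells the word `z j`. -/
def IsNPartition (α : ℝ) (n : ℕ) (f : ℤ → Bool) (d : ℤ → ℤ) (z : ℤ → List Bool) : Prop :=
  StrictMono d ∧
  (d 0 ≤ 0 ∧ 0 < d 1) ∧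
  (∀ j : ℤ, z j = sw α (n + 1) ∨ z j = sw α n) ∧
  (∀ j : ℤ, d (j + 1) = d j + (z j).length) ∧
  (∀ j : ℤ, z j = (List.range (z j).length).map fun k => f (d j + (k : ℤ)))

/-- The finite word `x` occurs in the two-sided sequence `v` adjacent to `i`:
either `x = v_i v_{i+1} … v_{i+l-1}` or `x = v_{i-l+1} … v_{i-1} v_i`. -/
def AdjacentTo (v : ℤ → Bool) (x : List Bool) (i : ℤ) : Prop :=
  x = ((List.range x.length).map fun k => v (i + (k : ℤ))) ∨
  x = ((List.range x.length).map fun k => v (i - (x.length : ℤ) + 1 + (k : ℤ)))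

/-! ### Traces of products of unimodular two-by-two matrices -/

/-- Cayley–Hamilton for a two-by-two matrix of determinant one. -/
lemma sq_eq_of_det_one (B : Matrix (Fin 2) (Fin 2) ℂ) (hB : B.det = 1) :
    B * B = B.trace • B - 1 := by
  rw [Matrix.det_fin_two] at hB
  ext i j
  fin_cases i <;> fin_cases j <;>
    simp [Matrix.mul_apply, Matrix.trace_fin_two, Fin.sum_univ_two] <;>
    first | ring1 | linear_combination (-1 : ℂ) * hB

lemma trace_rec (A B : Matrix (Fin 2) (Fin 2) ℂ) (hB : B.det = 1) (k : ℕ) :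
    (A * B ^ (k + 2)).trace = B.trace * (A * B ^ (k + 1)).trace - (A * B ^ k).trace := by
  have h : A * B ^ (k + 2) = B.trace • (A * B ^ (k + 1)) - A * B ^ k := by
    rw [pow_add, pow_two, sq_eq_of_det_one B hB, mul_sub, mul_sub, mul_smul_comm, mul_smul_comm,
      mul_one, pow_succ]
  rw [h, Matrix.trace_sub, Matrix.trace_smul, smul_eq_mul]

section Hyperbolic

variable {X : ℂ} {y : ℕ → ℂ}

/-- Once a solution of `y (k+2) = X y (k+1) - y k` with `2 ≤ ‖X‖` fails to decrease in modulus, it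
never decreases again. -/
lemma hyp_mono (hX : 2 ≤ ‖X‖) (hy : ∀ k, y (k + 2) = X * y (k + 1) - y k) {k : ℕ}
    (h : ‖y k‖ ≤ ‖y (k + 1)‖) (l : ℕ) : ‖y (k + l)‖ ≤ ‖y (k + l + 1)‖ := by
  induction l with
  | zero => simpa using h
  | succ l ih =>
    have h1 := norm_sub_norm_le (X * y (k + l + 1)) (y (k + l))
    rw [← hy, norm_mul] at h1
    have h2 : 2 * ‖y (k + l + 1)‖ ≤ ‖X‖ * ‖y (k + l + 1)‖ := by gcongr
    have : k + (l + 1) = k + l + 1 := rfl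
    rw [this]
    linarith

lemma hyp_le (hX : 2 ≤ ‖X‖) (hy : ∀ k, y (k + 2) = X * y (k + 1) - y k) {k : ℕ}
    (h : ‖y k‖ ≤ ‖y (k + 1)‖) (l : ℕ) : ‖y k‖ ≤ ‖y (k + l)‖ := by
  induction l with
  | zero => simp
  | succ l ih => exact ih.trans (hyp_mono hX hy h l)

/-- The last step is strictly smaller than the one before, hence all earlier steps were
decreasing. -/
lemma hyp_anti (hX : 2 ≤ ‖X‖) (hy : ∀ k, y (k + 2) = X * y (k + 1) - y k) {a : ℕ}
    (h : ‖y (a + 1)‖ < ‖y a‖) : ∀ k ≤ a, ‖y (a + 1)‖ ≤ ‖y k‖ := by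
  have h1 : ∀ k ≤ a, ‖y (k + 1)‖ < ‖y k‖ := by
    intro k hk
    by_contra! hc
    have := hyp_mono hX hy hc (a - k)
    rw [Nat.add_sub_cancel' hk] at this
    linarith
  intro k hk
  induction hk using Nat.decreasingInduction with
  | self => exact h.le
  | of_succ k hk ih => exact ih.trans (h1 k hk.le).le

/-- A strict increase at the step reaching modulus above `2` makes the following value exceed both
`‖X‖` and its predecessor. -/
lemma hyp_escape (hX : 2 < ‖X‖) (hy : ∀ k, y (k + 2) = X * y (k + 1) - y k) {a : ℕ}
    (h : ‖y a‖ ≤ ‖y (a + 1)‖) (h2 : 2 < ‖y (a + 1)‖) :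
    ‖X‖ < ‖y (a + 2)‖ ∧ ‖y (a + 1)‖ < ‖y (a + 2)‖ := by
  have h1 := norm_sub_norm_le (X * y (a + 1)) (y a)
  rw [← hy, norm_mul] at h1
  constructor <;> nlinarith

lemma hyp_invariant (hy : ∀ k, y (k + 2) = X * y (k + 1) - y k) (k : ℕ) :
    X ^ 2 + y k ^ 2 + y (k + 1) ^ 2 - X * y k * y (k + 1) =
      X ^ 2 + y 0 ^ 2 + y 1 ^ 2 - X * y 0 * y 1 := by
  induction k with
  | zero => rfl
  | succ k ih => rw [← ih, show k + 1 + 1 = k + 2 from rfl, hy]; ring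

end Hyperbolic

/-! ### The trace map: escape and boundedness -/

/-- The escape condition at level `n` for the traces of a sequence of matrices: two consecutive
traces exceed two in modulus, and the trace of the product of the two matrices exceeds both. -/
def Escapes (M : ℕ → Matrix (Fin 2) (Fin 2) ℂ) (n : ℕ) : Prop :=
  2 < ‖(M n).trace‖ ∧ 2 < ‖(M (n + 1)).trace‖ ∧
    ‖(M n).trace‖ < ‖(M n * M (n + 1)).trace‖ ∧
    ‖(M (n + 1)).trace‖ < ‖(M n * M (n + 1)).trace‖

section TraceMap

variable {M : ℕ → Matrix (Fin 2) (Fin 2) ℂ} {a : ℕ → ℕ}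

lemma trace_next (hM : ∀ n, M (n + 2) = M n * M (n + 1) ^ (a n + 1)) (n : ℕ) :
    (M (n + 1) * M (n + 2)).trace = (M n * M (n + 1) ^ (a n + 2)).trace := by
  rw [Matrix.trace_mul_comm, hM, mul_assoc, ← pow_succ]

lemma Escapes.succ (hdet : ∀ n, (M n).det = 1)
    (hM : ∀ n, M (n + 2) = M n * M (n + 1) ^ (a n + 1)) {n : ℕ} (h : Escapes M n) :
    Escapes M (n + 1) := by
  obtain ⟨h1, h2, h3, h4⟩ := h
  have hy := trace_rec (M n) (M (n + 1)) (hdet _)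
  have h01 : ‖(M n * M (n + 1) ^ 0).trace‖ ≤ ‖(M n * M (n + 1) ^ (0 + 1)).trace‖ := by
    simpa using h3.le
  have hmono := hyp_mono (y := fun k => (M n * M (n + 1) ^ k).trace) h2.le hy h01
  have hle := hyp_le (y := fun k => (M n * M (n + 1) ^ k).trace) h2.le hy (k := 1)
    (by simpa using hmono 1) (a n)
  have hx : 2 < ‖(M (n + 2)).trace‖ := by
    rw [hM, add_comm (a n)]
    simp only [pow_one] at hle
    linarith
  have := hyp_escape (y := fun k => (M n * M (n + 1) ^ k).trace) h2 hy (a := a n)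
    (by simpa using hmono (a n)) (by simpa [← hM] using hx)
  refine ⟨h2, hx, ?_, ?_⟩
  · rw [trace_next hM]; exact this.1
  · rw [trace_next hM, hM n]; exact this.2

lemma Escapes.two_lt (hdet : ∀ n, (M n).det = 1)
    (hM : ∀ n, M (n + 2) = M n * M (n + 1) ^ (a n + 1)) {n : ℕ} (h : Escapes M n) (k : ℕ) :
    2 < ‖(M (n + k)).trace‖ := by
  have : Escapes M (n + k) := by
    induction k with
    | zero => exact h
    | succ k ih => exact ih.succ hdet hM
  exact this.1

/-- Without escape, two consecutive large traces force a large trace two levels earlier. -/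
lemma trace_le_of_not_escapes (hdet : ∀ n, (M n).det = 1)
    (hM : ∀ n, M (n + 2) = M n * M (n + 1) ^ (a n + 1)) {n : ℕ} (h : ¬ Escapes M (n + 1))
    (h1 : 2 < ‖(M (n + 1)).trace‖) (h2 : 2 < ‖(M (n + 2)).trace‖) :
    ‖(M (n + 2)).trace‖ ≤ ‖(M n).trace‖ := by
  have hy := trace_rec (M n) (M (n + 1)) (hdet _)
  rcases le_or_gt ‖(M n * M (n + 1) ^ (a n)).trace‖ ‖(M n * M (n + 1) ^ (a n + 1)).trace‖
    with hc | hc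
  · exfalso
    have := hyp_escape (y := fun k => (M n * M (n + 1) ^ k).trace) h1 hy (a := a n) hc
      (by simpa [← hM] using h2)
    refine h ⟨h1, h2, ?_, ?_⟩
    · rw [trace_next hM]; exact this.1
    · rw [trace_next hM, hM n]; exact this.2
  · have := hyp_anti (y := fun k => (M n * M (n + 1) ^ k).trace) h1.le hy hc 0 (Nat.zero_le _)
    simpa [← hM] using this

/-- The Fricke–Vogt invariant is conserved by the trace map. -/
lemma fricke (hdet : ∀ n, (M n).det = 1)
    (hM : ∀ n, M (n + 2) = M n * M (n + 1) ^ (a n + 1)) (n : ℕ) :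
    (M (n + 1)).trace ^ 2 + (M n).trace ^ 2 + (M n * M (n + 1)).trace ^ 2
        - (M (n + 1)).trace * (M n).trace * (M n * M (n + 1)).trace =
      (M 1).trace ^ 2 + (M 0).trace ^ 2 + (M 0 * M 1).trace ^ 2
        - (M 1).trace * (M 0).trace * (M 0 * M 1).trace := by
  induction n with
  | zero => rfl
  | succ n ih =>
    have h := hyp_invariant (y := fun k => (M n * M (n + 1) ^ k).trace)
      (trace_rec (M n) (M (n + 1)) (hdet _)) (a n + 1)
    simp only [pow_zero, mul_one, pow_one] at h
    rw [← ih, ← h, trace_next hM, hM n]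
    ring

/-- If no level escapes, the traces stay bounded. A large trace with small neighbours is controlled
by the invariant; a run of large traces is controlled by `trace_le_of_not_escapes`. -/
lemma trace_bounded (hdet : ∀ n, (M n).det = 1)
    (hM : ∀ n, M (n + 2) = M n * M (n + 1) ^ (a n + 1)) (h : ∀ n, ¬ Escapes M n) :
    ∃ C : ℝ, ∀ n, ‖(M n).trace‖ ≤ C := by
  set K : ℂ := (M 1).trace ^ 2 + (M 0).trace ^ 2 + (M 0 * M 1).trace ^ 2
        - (M 1).trace * (M 0).trace * (M 0 * M 1).trace with hK
  obtain ⟨C, hC1, hC2, hC3⟩ : ∃ C : ℝ, ‖(M 0).trace‖ ≤ C ∧ ‖(M 1).trace‖ ≤ C ∧ 13 + ‖K‖ ≤ C :=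
    ⟨max ‖(M 0).trace‖ (max ‖(M 1).trace‖ (13 + ‖K‖)), by simp, by simp, by simp⟩
  have hK0 := norm_nonneg K
  refine ⟨C, ?_⟩
  suffices H : ∀ n, ‖(M n).trace‖ ≤ C ∧ ‖(M (n + 1)).trace‖ ≤ C from fun n => (H n).1
  intro n
  induction n with
  | zero => exact ⟨hC1, hC2⟩
  | succ n ih =>
    refine ⟨ih.2, ?_⟩
    by_cases h2 : ‖(M (n + 1 + 1)).trace‖ ≤ 2
    · linarith
    push Not at h2
    by_cases h1 : 2 < ‖(M (n + 1)).trace‖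
    · exact (trace_le_of_not_escapes hdet hM (h _) h1 h2).trans ih.1
    push Not at h1
    have h3 : ‖(M (n + 3)).trace‖ ≤ 2 := by
      by_contra! h3
      have := trace_le_of_not_escapes hdet hM (h _) h2 h3
      linarith
    have hz : ‖(M (n + 1) * M (n + 2)).trace‖ ≤ 2 := by
      have hy := trace_rec (M (n + 1)) (M (n + 2)) (hdet _)
      by_contra! hz
      have h01 : ‖(M (n + 1) * M (n + 2) ^ 0).trace‖ ≤ ‖(M (n + 1) * M (n + 2) ^ (0 + 1)).trace‖ := by
        simp only [pow_zero, mul_one, zero_add, pow_one]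
        linarith
      have hmono := hyp_mono (y := fun k => (M (n + 1) * M (n + 2) ^ k).trace) h2.le hy h01
      have hle := hyp_le (y := fun k => (M (n + 1) * M (n + 2) ^ k).trace) h2.le hy (k := 1)
        (by simpa using hmono 1) (a (n + 1))
      rw [add_comm 1, ← hM, pow_one] at hle
      linarith
    have hf := fricke hdet hM (n + 1)
    rw [← hK] at hf
    have e : (M (n + 2)).trace ^ 2 = K - (M (n + 1)).trace ^ 2 - (M (n + 1) * M (n + 2)).trace ^ 2
        + (M (n + 2)).trace * (M (n + 1)).trace * (M (n + 1) * M (n + 2)).trace := by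
      rw [← hf]; ring
    have e2 : ‖(M (n + 2)).trace‖ ^ 2 ≤ ‖K‖ + ‖(M (n + 1)).trace‖ ^ 2
        + ‖(M (n + 1) * M (n + 2)).trace‖ ^ 2
        + ‖(M (n + 2)).trace‖ * ‖(M (n + 1)).trace‖ * ‖(M (n + 1) * M (n + 2)).trace‖ := by
      rw [← norm_pow, e]
      refine (norm_add_le _ _).trans ?_
      rw [norm_mul, norm_mul]
      gcongr
      refine (norm_sub_le _ _).trans ?_
      rw [norm_pow]
      gcongr
      refine (norm_sub_le _ _).trans ?_
      rw [norm_pow]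
    have e3 : ‖(M (n + 2)).trace‖ * ‖(M (n + 1)).trace‖ * ‖(M (n + 1) * M (n + 2)).trace‖
        ≤ ‖(M (n + 2)).trace‖ * 2 * 2 := by gcongr
    have e4 : ‖(M (n + 1)).trace‖ ^ 2 ≤ 2 ^ 2 := by gcongr
    have e5 : ‖(M (n + 1) * M (n + 2)).trace‖ ^ 2 ≤ 2 ^ 2 := by gcongr
    change ‖(M (n + 2)).trace‖ ≤ C
    by_contra! hc
    nlinarith

end TraceMap

/-! ### Transfer matrices -/

/-- One-step transfer matrix. -/
def stepM (z : ℂ) : Matrix (Fin 2) (Fin 2) ℂ := !![z, -1; 1, 0]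

/-- Transfer matrix across the sites `b, …, b + k - 1`, where `f n` stands for the energy minus the
potential at site `n`. It maps `(u b, u (b-1))` to `(u (b+k), u (b+k-1))`. -/
def tm (f : ℤ → ℂ) (b : ℤ) : ℕ → Matrix (Fin 2) (Fin 2) ℂ
  | 0 => 1
  | k + 1 => stepM (f (b + k)) * tm f b k

lemma stepM_det (z : ℂ) : (stepM z).det = 1 := by simp [stepM, Matrix.det_fin_two]

lemma tm_det (f : ℤ → ℂ) (b : ℤ) (k : ℕ) : (tm f b k).det = 1 := by
  induction k with
  | zero => simp [tm]
  | succ k ih => rw [tm, Matrix.det_mul, ih, stepM_det, one_mul]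

lemma tm_add (f : ℤ → ℂ) (b : ℤ) (k l : ℕ) : tm f b (k + l) = tm f (b + k) l * tm f b k := by
  induction l with
  | zero => simp [tm]
  | succ l ih =>
    rw [← add_assoc, tm, ih, tm, mul_assoc]
    push_cast
    rw [add_assoc]

lemma tm_congr {f g : ℤ → ℂ} {b b' : ℤ} {k : ℕ}
    (h : ∀ i : ℕ, i < k → f (b + i) = g (b' + i)) : tm f b k = tm g b' k := by
  induction k with
  | zero => rfl
  | succ k ih => rw [tm, tm, h k (Nat.lt_succ_self k), ih fun i hi => h i (Nat.lt_succ_of_lt hi)]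

/-- The trace over a full period does not depend on the starting point. -/
lemma tm_trace_shift {f : ℤ → ℂ} {b : ℤ} {k : ℕ} (h : f (b + k) = f b) :
    (tm f (b + 1) k).trace = (tm f b k).trace := by
  have h1 : tm f b (1 + k) = tm f (b + 1) k * stepM (f b) := by
    rw [tm_add]; simp [tm]
  have h2 : tm f b (1 + k) = stepM (f b) * tm f b k := by
    rw [add_comm, tm, h]
  have hu : IsUnit (stepM (f b)).det := by rw [stepM_det]; exact isUnit_one
  have h3 : tm f (b + 1) k = stepM (f b) * tm f b k * (stepM (f b))⁻¹ := by
    rw [← h2, h1, mul_assoc, Matrix.mul_nonsing_inv _ hu, mul_one]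
  rw [h3, Matrix.trace_mul_comm, ← mul_assoc, Matrix.nonsing_inv_mul _ hu, one_mul]

lemma tm_apply {f u : ℤ → ℂ} (hu : ∀ n, u (n + 1) + u (n - 1) = f n * u n) (b : ℤ) (k : ℕ) :
    (tm f b k).mulVec ![u b, u (b - 1)] = ![u (b + k), u (b + k - 1)] := by
  induction k with
  | zero => simp [tm]
  | succ k ih =>
    rw [tm, ← Matrix.mulVec_mulVec, ih]
    have := hu (b + k)
    ext i
    fin_cases i
    · simp [stepM, Matrix.mulVec, dotProduct]
      rw [← add_assoc]
      linear_combination -this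
    · simp [stepM, Matrix.mulVec, dotProduct]
      congr 1
      ring

lemma tm_continuous {ι : Type*} [TopologicalSpace ι] {F : ι → ℤ → ℂ}
    (hF : ∀ n, Continuous fun x => F x n) (b : ℤ) (k : ℕ) :
    Continuous fun x => tm (F x) b k := by
  induction k with
  | zero => exact continuous_const
  | succ k ih =>
    simp only [tm]
    refine Continuous.matrix_mul ?_ ih
    refine continuous_matrix fun i j => ?_
    fin_cases i <;> fin_cases j <;> simp [stepM]
    exacts [hF _, continuous_const, continuous_const, continuous_const]

/-- Two-block relation: across two equal blocks the solution obeys the three-term recursion given by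
the trace of one block. -/
lemma two_block {f u : ℤ → ℂ} (hu : ∀ n, u (n + 1) + u (n - 1) = f n * u n) {b : ℤ} {q : ℕ}
    (hf : ∀ i : ℕ, i < q → f (b + q + i) = f (b + i)) :
    u (b + 2 * q) + u b = (tm f b q).trace * u (b + q) ∧
      u (b + 2 * q - 1) + u (b - 1) = (tm f b q).trace * u (b + q - 1) := by
  have h1 := tm_apply hu b q
  have h2 := tm_apply hu (b + q) q
  rw [tm_congr hf, ← h1, Matrix.mulVec_mulVec, sq_eq_of_det_one _ (tm_det f b q),
    Matrix.sub_mulVec, Matrix.smul_mulVec, h1, Matrix.one_mulVec] at h2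
  have h3 := congrFun h2 0
  have h4 := congrFun h2 1
  simp at h3 h4
  rw [show b + 2 * (q : ℤ) = b + q + q by ring, ← h3, ← h4]
  constructor <;> ring

/-! ### Periodic approximants -/

/-- An approximate eigenvector of a symmetric operator forces a nearby true eigenvalue. -/
lemma exists_eigenvalue_near {V : Type*} [NormedAddCommGroup V] [InnerProductSpace ℂ V]
    [FiniteDimensional ℂ V] {T : V →ₗ[ℂ] V} (hT : T.IsSymmetric) (E : ℂ) {w : V} (hw : w ≠ 0) :
    ∃ (μ : ℂ) (x : V), x ≠ 0 ∧ T x = μ • x ∧ ‖μ - E‖ * ‖w‖ ≤ ‖T w - E • w‖ := by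
  set B := hT.eigenvectorBasis rfl with hB
  set μ : Fin (Module.finrank ℂ V) → ℝ := hT.eigenvalues rfl
  have hBT : ∀ i, T (B i) = (μ i : ℂ) • B i := fun i => hT.apply_eigenvectorBasis rfl i
  by_contra! hc
  have hc' : ∀ i, ‖T w - E • w‖ < ‖(μ i : ℂ) - E‖ * ‖w‖ := fun i =>
    hc (μ i) (B i) (B.orthonormal.ne_zero i) (hBT i)
  have hin : ∀ i, inner ℂ (B i) (T w - E • w) = ((μ i : ℂ) - E) * inner ℂ (B i) w := by
    intro i
    rw [inner_sub_right, ← hT, hBT, inner_smul_left, inner_smul_right]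
    simp
    ring
  have h1 := B.sum_sq_norm_inner_right w
  have h2 := B.sum_sq_norm_inner_right (T w - E • w)
  simp only [hin, norm_mul, mul_pow] at h2
  have hwpos : 0 < ‖w‖ := norm_pos_iff.mpr hw
  obtain ⟨i, hi⟩ : ∃ i, inner ℂ (B i) w ≠ 0 := by
    by_contra! h0
    simp [h0] at h1
    exact hwpos.ne' (pow_eq_zero_iff two_ne_zero |>.mp h1.symm)
  have h3 : ∑ i, ‖T w - E • w‖ ^ 2 * ‖inner ℂ (B i) w‖ ^ 2
      < ∑ i, (‖(μ i : ℂ) - E‖ * ‖w‖) ^ 2 * ‖inner ℂ (B i) w‖ ^ 2 := by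
    refine Finset.sum_lt_sum (fun j _ => ?_) ⟨i, Finset.mem_univ i, ?_⟩
    · have := (hc' j).le
      gcongr
    · have := hc' i
      have hpos : 0 < ‖inner ℂ (B i) w‖ ^ 2 := by positivity
      gcongr
  rw [← Finset.mul_sum, h1] at h3
  have h4 : ∑ i, (‖(μ i : ℂ) - E‖ * ‖w‖) ^ 2 * ‖inner ℂ (B i) w‖ ^ 2
      = ‖w‖ ^ 2 * ‖T w - E • w‖ ^ 2 := by
    rw [← h2, Finset.mul_sum]
    exact Finset.sum_congr rfl fun j _ => by ring
  rw [h4] at h3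
  linarith

/-- Discrete Schrödinger operator on the cycle of length `q`, with the potential read off from
`V` on `[b, b + q)`. -/
noncomputable def cyc (V : ℤ → ℝ) (b : ℤ) (q : ℕ) :
    EuclideanSpace ℂ (ZMod q) →ₗ[ℂ] EuclideanSpace ℂ (ZMod q) where
  toFun x := WithLp.toLp 2 fun j => x (j + 1) + x (j - 1) + (V (b + j.val) : ℂ) * x j
  map_add' x y := by ext j; simp; ring
  map_smul' c x := by ext j; simp; ring

lemma cyc_apply (V : ℤ → ℝ) (b : ℤ) (q : ℕ) (x : EuclideanSpace ℂ (ZMod q)) (j : ZMod q) :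
    cyc V b q x j = x (j + 1) + x (j - 1) + (V (b + j.val) : ℂ) * x j := rfl

lemma cyc_symm (V : ℤ → ℝ) (b : ℤ) (q : ℕ) [NeZero q] : (cyc V b q).IsSymmetric := by
  intro x y
  simp only [PiLp.inner_apply, cyc_apply, RCLike.inner_apply, map_add, map_mul, mul_add, add_mul,
    Finset.sum_add_distrib]
  have h1 : ∑ j : ZMod q, y j * (starRingEnd ℂ) (x (j + 1))
      = ∑ j : ZMod q, y (j - 1) * (starRingEnd ℂ) (x j) :=
    Fintype.sum_equiv (Equiv.addRight 1) _ _ fun j => by simp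
  have h2 : ∑ j : ZMod q, y j * (starRingEnd ℂ) (x (j - 1))
      = ∑ j : ZMod q, y (j + 1) * (starRingEnd ℂ) (x j) :=
    Fintype.sum_equiv (Equiv.subRight 1) _ _ fun j => by simp
  rw [h1, h2]
  simp
  rw [add_comm (∑ j : ZMod q, y (j - 1) * (starRingEnd ℂ) (x j))]
  congr 1
  exact Finset.sum_congr rfl fun j _ => by ring

/-- An eigenvalue of the operator on the cycle makes the transfer matrix of one period have a fixed
vector, hence trace `2`. -/
lemma trace_eq_two_of_cyc {V : ℤ → ℝ} {b : ℤ} {q : ℕ} [NeZero q] {μ : ℂ}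
    {x : EuclideanSpace ℂ (ZMod q)} (hx : x ≠ 0) (h : cyc V b q x = μ • x) :
    (tm (fun n => μ - V n) b q).trace = 2 := by
  -- the `q`-periodic extension of `x` solves the equation with the `q`-periodic potential
  set φ : ℤ → ℂ := fun n => x ((n - b : ℤ) : ZMod q) with hφ
  set g : ℤ → ℂ := fun n => μ - V (b + ((n - b : ℤ) : ZMod q).val) with hg
  have hsol : ∀ n, φ (n + 1) + φ (n - 1) = g n * φ n := by
    intro n
    have := congrArg (fun y : EuclideanSpace ℂ (ZMod q) => y ((n - b : ℤ) : ZMod q)) h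
    simp only [cyc_apply, PiLp.smul_apply, smul_eq_mul] at this
    simp only [hφ, hg]
    have e1 : ((n + 1 - b : ℤ) : ZMod q) = ((n - b : ℤ) : ZMod q) + 1 := by push_cast; ring
    have e2 : ((n - 1 - b : ℤ) : ZMod q) = ((n - b : ℤ) : ZMod q) - 1 := by push_cast; ring
    rw [e1, e2]
    linear_combination this
  have htm : tm (fun n => μ - (V n : ℂ)) b q = tm g b q := by
    refine tm_congr fun i hi => ?_
    simp only [hg, add_sub_cancel_left, Int.cast_natCast, ZMod.val_cast_of_lt hi]
  have hfix := tm_apply hsol b q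
  have p1 : φ (b + q) = φ b := by simp [hφ]
  have p2 : φ (b + q - 1) = φ (b - 1) := by simp [hφ]
  rw [p1, p2] at hfix
  have hne : ![φ b, φ (b - 1)] ≠ 0 := by
    intro h0
    apply hx
    ext j
    have := tm_apply hsol b j.val
    rw [h0, Matrix.mulVec_zero] at this
    have := congrFun this 0
    simpa [hφ] using this.symm
  have hd : (tm g b q - 1).det = 0 := by
    refine Matrix.exists_mulVec_eq_zero_iff.mp ⟨_, hne, ?_⟩
    rw [Matrix.sub_mulVec, hfix, Matrix.one_mulVec, sub_self]
  have hd1 := tm_det g b q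
  rw [Matrix.det_fin_two] at hd hd1
  simp at hd
  rw [htm, Matrix.trace_fin_two]
  linear_combination hd1 - hd

/-- Cutting a square-summable solution to a long window and closing it up to a cycle produces
energies near `E` at which the transfer matrix of the window has trace `2`. -/
lemma exists_energy_near {V : ℤ → ℝ} {E : ℂ} {u : ℤ → ℂ}
    (hu : Summable fun n : ℤ => ‖u n‖ ^ 2)
    (heq : ∀ n, u (n + 1) + u (n - 1) = (E - V n) * u n) (hne : u ≠ 0) {ε : ℝ} (hε : 0 < ε) :
    ∃ N : ℕ, ∀ (b : ℤ) (q : ℕ), b ≤ -N → N ≤ b + q →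
      ∃ μ : ℂ, ‖μ - E‖ < ε ∧ (tm (fun n => μ - V n) b q).trace = 2 := by
  obtain ⟨n₀, hn₀⟩ : ∃ n, u n ≠ 0 := by
    by_contra! h
    exact hne (funext h)
  set η : ℝ := ε * ‖u n₀‖ / 4 with hη
  have hηpos : 0 < η := by positivity
  have hfin : {n : ℤ | ¬ ‖u n‖ < η}.Finite := by
    have h0 := hu.tendsto_cofinite_zero
    have := h0.eventually (gt_mem_nhds (show (0 : ℝ) < η ^ 2 by positivity))
    rw [Filter.eventually_cofinite] at this
    refine this.subset fun n hn hlt => hn ?_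
    exact lt_of_pow_lt_pow_left₀ 2 hηpos.le hlt
  obtain ⟨N, hN⟩ : ∃ N : ℕ, ∀ n : ℤ, ¬ ‖u n‖ < η → n.natAbs ≤ N := by
    obtain ⟨N, hN⟩ := (hfin.image Int.natAbs).bddAbove
    exact ⟨N, fun n hn => hN ⟨n, hn, rfl⟩⟩
  have hsmall : ∀ n : ℤ, (n < -N ∨ N < n) → ‖u n‖ < η := by
    intro n hn
    by_contra hc
    have := hN n hc
    omega
  refine ⟨N + n₀.natAbs + 3, fun b q hb hq => ?_⟩
  push_cast at hb hq
  have hn1 := le_abs_self n₀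
  have hn2 := neg_abs_le n₀
  have hn3 := abs_nonneg n₀
  have hq3 : 3 ≤ q := by omega
  have : NeZero q := ⟨by omega⟩
  set w : EuclideanSpace ℂ (ZMod q) := WithLp.toLp 2 fun j => u (b + j.val) with hw
  have hw0 : ‖u n₀‖ ≤ ‖w‖ := by
    have h1 := PiLp.norm_apply_le w (((n₀ - b).toNat : ℕ) : ZMod q)
    have h2 : (((n₀ - b).toNat : ℕ) : ZMod q).val = (n₀ - b).toNat :=
      ZMod.val_cast_of_lt (by omega)
    simp only [hw, h2] at h1
    rwa [show b + ((n₀ - b).toNat : ℤ) = n₀ by omega] at h1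
  have hwne : w ≠ 0 := by
    rintro h0
    rw [h0, norm_zero] at hw0
    exact hn₀ (norm_le_zero_iff.mp hw0)
  obtain ⟨μ, x, hx, hxe, hμ⟩ := exists_eigenvalue_near (cyc_symm V b q) E hwne
  refine ⟨μ, ?_, trace_eq_two_of_cyc hx hxe⟩
  have herr : ‖cyc V b q w - E • w‖ ^ 2 ≤ 8 * η ^ 2 := by
    rw [EuclideanSpace.norm_sq_eq]
    have hj : ∀ j : ZMod q, ‖(cyc V b q w - E • w) j‖ ^ 2 ≤
        (if j = 0 then 4 * η ^ 2 else 0) + (if j = -1 then 4 * η ^ 2 else 0) := by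
      intro j
      have hjlt := ZMod.val_lt j
      have hjj : ((j.val : ℕ) : ZMod q) = j := ZMod.natCast_zmod_val j
      have hE := heq (b + j.val)
      have hval : (cyc V b q w - E • w) j = (u (b + (j + 1).val) - u (b + j.val + 1))
          + (u (b + (j - 1).val) - u (b + j.val - 1)) := by
        rw [PiLp.sub_apply, cyc_apply]
        simp only [hw, PiLp.smul_apply, smul_eq_mul]
        linear_combination hE
      have sq4 : ∀ y z : ℂ, ‖y‖ < η → ‖z‖ < η → ‖y - z‖ ^ 2 ≤ 4 * η ^ 2 := by
        intro y z hy hz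
        have h1 := norm_sub_le y z
        have h2 : ‖y - z‖ ≤ 2 * η := by linarith
        calc ‖y - z‖ ^ 2 ≤ (2 * η) ^ 2 := by gcongr
          _ = _ := by ring
      have hA : j.val + 1 < q → (j + 1).val = j.val + 1 := by
        intro hlt
        have := ZMod.val_cast_of_lt hlt
        rwa [Nat.cast_add, hjj, Nat.cast_one] at this
      have hB : j.val + 1 = q → j = -1 := by
        intro he
        have : ((j.val + 1 : ℕ) : ZMod q) = 0 := by rw [he]; simp
        rw [Nat.cast_add, hjj, Nat.cast_one] at this
        exact eq_neg_of_add_eq_zero_left this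
      have hC : 0 < j.val → (j - 1).val = j.val - 1 := by
        intro hlt
        have := ZMod.val_cast_of_lt (show j.val - 1 < q by omega)
        rwa [Nat.cast_sub hlt, hjj, Nat.cast_one] at this
      have hpos : (0 : ℝ) ≤ 4 * η ^ 2 := by positivity
      rcases Nat.eq_zero_or_pos j.val with h0 | h0
      · have hj0 : j = 0 := (ZMod.val_eq_zero j).mp h0
        have hlast : (j - 1).val = q - 1 := by
          have := ZMod.val_cast_of_lt (show q - 1 < q by omega)
          rw [Nat.cast_sub (by omega), ZMod.natCast_self, Nat.cast_one] at this
          rwa [hj0]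
        rw [hval, hA (by omega), hlast, h0]
        simp only [hj0, if_true, zero_add, Nat.cast_one, Nat.cast_zero, add_zero, sub_self]
        have := sq4 (u (b + ((q - 1 : ℕ) : ℤ))) (u (b - 1))
          (hsmall _ (by omega)) (hsmall _ (by omega))
        split_ifs <;> linarith
      · rcases Nat.lt_or_ge (j.val + 1) q with h1 | h1
        · rw [hval, hA h1, hC h0]
          have e1 : b + ((j.val + 1 : ℕ) : ℤ) = b + j.val + 1 := by push_cast; ring
          have e2 : b + ((j.val - 1 : ℕ) : ℤ) = b + j.val - 1 := by omega
          rw [e1, e2, sub_self, sub_self, add_zero, norm_zero]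
          split_ifs <;> simp <;> linarith
        · have hj1 : j = -1 := hB (by omega)
          have hnext : (j + 1).val = 0 := by rw [hj1]; simp
          rw [hval, hnext, hC h0]
          have e2 : b + ((j.val - 1 : ℕ) : ℤ) = b + j.val - 1 := by omega
          rw [e2, sub_self, add_zero]
          have := sq4 (u (b + ((0 : ℕ) : ℤ))) (u (b + j.val + 1))
            (hsmall _ (by omega)) (hsmall _ (by omega))
          rw [if_pos hj1]
          split_ifs <;> linarith
    refine (Finset.sum_le_sum fun j _ => hj j).trans ?_
    rw [Finset.sum_add_distrib, Finset.sum_ite_eq', Finset.sum_ite_eq']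
    simp
    linarith
  have herr' : ‖cyc V b q w - E • w‖ < 4 * η := by
    refine lt_of_pow_lt_pow_left₀ 2 (by positivity) (herr.trans_lt ?_)
    nlinarith [sq_pos_of_pos hηpos]
  have hpos : 0 < ‖u n₀‖ := norm_pos_iff.mpr hn₀
  have h1 : ‖μ - E‖ * ‖u n₀‖ ≤ ‖μ - E‖ * ‖w‖ := by gcongr
  have h2 : ‖μ - E‖ * ‖u n₀‖ < ε * ‖u n₀‖ := by
    rw [hη] at herr'
    linarith
  exact lt_of_mul_lt_mul_right h2 hpos.le

/-! ### Convergents -/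

/-- The facts about the convergents `p n / q n` of `α` used below; `a n` is the partial quotient in
`q (n+2) = a n * q (n+1) + q n`, and `d n` is the distance `|q n * α - p n|`. -/
structure Conv (α : ℝ) (a q : ℕ → ℕ) (p : ℕ → ℤ) (d : ℕ → ℝ) : Prop where
  irr : Irrational α
  a_pos : ∀ n, 1 ≤ a n
  q_zero : q 0 = 1
  q_one : 1 ≤ q 1
  q_rec : ∀ n, q (n + 2) = a n * q (n + 1) + q n
  det : ∀ n, p (n + 1) * q n - p n * q (n + 1) = (-1) ^ n
  d_eq : ∀ n, (q n : ℝ) * α - p n = (-1) ^ n * d n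
  d_pos : ∀ n, 0 < d n
  d_lt : ∀ n, d (n + 1) < d n
  d_mul : ∀ n, d n * q (n + 1) ≤ 1

/-- Numerators of the convergents of `α`. -/
noncomputable def pnum (α : ℝ) : ℕ → ℤ
  | 0 => 0
  | 1 => 1
  | n + 2 => cfa α (n + 2) * pnum α (n + 1) + pnum α n

/-- The orbit of `α` under the Gauss map. -/
noncomputable def gauss (α : ℝ) (n : ℕ) : ℝ := (fun x : ℝ => Int.fract x⁻¹)^[n] α

section Gauss

variable {α : ℝ}

lemma gauss_succ (n : ℕ) : gauss α (n + 1) = Int.fract (gauss α n)⁻¹ := by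
  simp [gauss, Function.iterate_succ_apply']

lemma gauss_spec (h0 : 0 < α) (h1 : α < 1) (hirr : Irrational α) (n : ℕ) :
    0 < gauss α n ∧ gauss α n < 1 ∧ Irrational (gauss α n) := by
  induction n with
  | zero => exact ⟨h0, h1, hirr⟩
  | succ n ih =>
    have hi : Irrational (gauss α n)⁻¹ := irrational_inv_iff.mpr ih.2.2
    have hf : Irrational (Int.fract (gauss α n)⁻¹) := by
      rw [Int.fract]
      exact hi.sub_intCast _
    rw [gauss_succ]
    exact ⟨lt_of_le_of_ne (Int.fract_nonneg _) hf.ne_zero.symm, Int.fract_lt_one _, hf⟩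

lemma gauss_mul (h0 : 0 < α) (h1 : α < 1) (hirr : Irrational α) (n : ℕ) :
    gauss α n * (cfa α (n + 1) + gauss α (n + 1)) = 1 := by
  have h := gauss_spec h0 h1 hirr n
  have e : (cfa α (n + 1) : ℝ) = ⌊(gauss α n)⁻¹⌋ := by
    have : cfa α (n + 1) = ⌊(gauss α n)⁻¹⌋₊ := rfl
    rw [this, ← natCast_floor_eq_intCast_floor (inv_nonneg.mpr h.1.le)]
  rw [e, gauss_succ, Int.floor_add_fract, mul_inv_cancel₀ h.1.ne']

lemma cfa_pos (h0 : 0 < α) (h1 : α < 1) (hirr : Irrational α) (n : ℕ) : 1 ≤ cfa α (n + 1) := by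
  have h := gauss_spec h0 h1 hirr n
  have : cfa α (n + 1) = ⌊(gauss α n)⁻¹⌋₊ := rfl
  rw [this, Nat.one_le_floor_iff]
  exact (one_lt_inv₀ h.1).mpr h.2.1 |>.le

lemma conv_cfa (h0 : 0 < α) (h1 : α < 1) (hirr : Irrational α) :
    Conv α (fun n => cfa α (n + 2)) (qden α) (pnum α)
      (fun n => (-1) ^ n * ((qden α n : ℝ) * α - pnum α n)) := by
  set d : ℕ → ℝ := fun n => (-1) ^ n * ((qden α n : ℝ) * α - pnum α n) with hd
  have hsq : ∀ n : ℕ, ((-1 : ℝ) ^ n) * (-1) ^ n = 1 := by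
    intro n; rw [← mul_pow]; simp
  have hrec : ∀ n, d (n + 2) = d n - cfa α (n + 2) * d (n + 1) := by
    intro n
    simp only [hd, qden, pnum]
    push_cast
    ring
  have hd0 : d 0 = α := by simp [hd, qden, pnum]
  have hd1 : d 1 = 1 - cfa α 1 * α := by simp [hd, qden, pnum]
  have hstep : ∀ n, d (n + 1) = d n * gauss α (n + 1) := by
    intro n
    induction n with
    | zero =>
      have h := gauss_mul h0 h1 hirr 0
      have : gauss α 0 = α := rfl
      rw [this] at h
      simp only [zero_add] at h ⊢
      rw [hd0, hd1]
      linarith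
    | succ n ih =>
      have h := gauss_mul h0 h1 hirr (n + 1)
      rw [hrec, ih]
      linear_combination (-d n) * h
  have hpos : ∀ n, 0 < d n := by
    intro n
    induction n with
    | zero => rw [hd0]; exact h0
    | succ n ih => rw [hstep]; exact mul_pos ih (gauss_spec h0 h1 hirr _).1
  have hmul : ∀ n, d n * qden α (n + 1) + d (n + 1) * qden α n = 1 := by
    intro n
    induction n with
    | zero => simp [hd0, hd1, qden]; ring
    | succ n ih =>
      rw [hrec, qden]
      push_cast
      linear_combination ih
  refine ⟨hirr, fun n => cfa_pos h0 h1 hirr _, rfl, cfa_pos h0 h1 hirr 0, fun n => rfl, ?_, ?_,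
    hpos, ?_, ?_⟩
  · intro n
    induction n with
    | zero => simp [qden, pnum]
    | succ n ih =>
      rw [qden, pnum]
      push_cast
      linear_combination -ih
  · intro n
    simp only [hd]
    rw [← mul_assoc, hsq, one_mul]
  · intro n
    rw [hstep]
    exact mul_lt_of_lt_one_right (hpos n) (gauss_spec h0 h1 hirr _).2.1
  · intro n
    have h2 : 0 ≤ d (n + 1) * qden α n := mul_nonneg (hpos _).le (Nat.cast_nonneg _)
    linarith [hmul n]

end Gauss

namespace Conv

variable {α : ℝ} {a q : ℕ → ℕ} {p : ℕ → ℤ} {d : ℕ → ℝ}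

lemma q_pos (H : Conv α a q p d) (n : ℕ) : 1 ≤ q n := by
  induction n using Nat.twoStepInduction with
  | zero => exact H.q_zero.ge
  | one => exact H.q_one
  | more n h1 h2 => rw [H.q_rec]; omega

lemma q_add_le (H : Conv α a q p d) (n : ℕ) : q (n + 1) + q n ≤ q (n + 2) := by
  rw [H.q_rec]
  have := Nat.mul_le_mul_right (q (n + 1)) (H.a_pos n)
  omega

lemma le_q (H : Conv α a q p d) (n : ℕ) : n ≤ q n := by
  induction n with
  | zero => omega
  | succ n ih =>
    rcases n with _ | n
    · exact H.q_one
    · have h1 := H.q_add_le n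
      have h2 := H.q_pos n
      change n + 2 ≤ q (n + 2)
      omega

/-- Best approximation property of convergents. -/
lemma best (H : Conv α a q p d) {n : ℕ} {k : ℤ} (hk0 : 0 < k) (hk : k < q (n + 1)) (r : ℤ) :
    d n ≤ |(k : ℝ) * α - r| := by
  -- coordinates of `(k, r)` in the lattice basis `(q n, p n)`, `(q (n+1), p (n+1))`
  obtain ⟨s, hs, hss⟩ : ∃ s : ℤ, s = (-1) ^ n ∧ s * s = 1 :=
    ⟨_, rfl, by rw [← mul_pow]; simp⟩
  have hdet := H.det n
  rw [← hs] at hdet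
  obtain ⟨x, hx⟩ : ∃ x : ℤ, x = s * (k * p (n + 1) - r * q (n + 1)) := ⟨_, rfl⟩
  obtain ⟨y, hy⟩ : ∃ y : ℤ, y = s * (r * q n - k * p n) := ⟨_, rfl⟩
  have hkx : k = x * q n + y * q (n + 1) := by
    rw [hx, hy]
    linear_combination (-k) * hss - (k * s) * hdet
  have hrx : r = x * p n + y * p (n + 1) := by
    rw [hx, hy]
    linear_combination (-r) * hss - (r * s) * hdet
  have hsr : (s : ℝ) = (-1) ^ n := by rw [hs]; push_cast; rfl
  have e : (k : ℝ) * α - r = s * (x * d n - y * d (n + 1)) := by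
    have e1 := H.d_eq n
    have e2 := H.d_eq (n + 1)
    rw [pow_succ] at e2
    rw [← hsr] at e1 e2
    have hkx' : (k : ℝ) = x * q n + y * q (n + 1) := by exact_mod_cast hkx
    have hrx' : (r : ℝ) = x * p n + y * p (n + 1) := by exact_mod_cast hrx
    rw [hkx', hrx']
    linear_combination x * e1 + y * e2
  have habs : |(s : ℝ)| = 1 := by rw [hsr]; simp
  rw [e, abs_mul, habs, one_mul]
  have hd := H.d_pos n
  have hd' := H.d_pos (n + 1)
  have hq : (1 : ℤ) ≤ q n := by exact_mod_cast H.q_pos n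
  rcases lt_trichotomy y 0 with hy0 | hy0 | hy0
  · have hx1 : 1 ≤ x := by
      by_contra! hc
      nlinarith
    have hx1' : (1 : ℝ) ≤ x := by exact_mod_cast hx1
    have hy1' : (y : ℝ) < 0 := by exact_mod_cast hy0
    refine le_trans ?_ (le_abs_self _)
    nlinarith
  · have hx0 : 1 ≤ |x| := by
      apply Int.one_le_abs
      rintro rfl
      rw [hy0] at hkx
      simp at hkx
      omega
    have hx0' : (1 : ℝ) ≤ |(x : ℝ)| := by exact_mod_cast hx0
    rw [hy0]
    simp only [Int.cast_zero, zero_mul, sub_zero, abs_mul, abs_of_pos hd]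
    nlinarith
  · have hx1 : x ≤ -1 := by
      by_contra! hc
      nlinarith
    have hx1' : (x : ℝ) ≤ -1 := by exact_mod_cast hx1
    have hy1' : (0 : ℝ) < y := by exact_mod_cast hy0
    refine le_trans ?_ (neg_le_abs _)
    nlinarith

end Conv

/-! ### Hits: where the `q n`-periodicity of the potential breaks -/

lemma sturmian_iff {α : ℝ} (h1 : α < 1) (θ : ℝ) (n : ℤ) :
    sturmian α θ n = true ↔ ⌊((n + 1 : ℤ) : ℝ) * α + θ⌋ - ⌊(n : ℝ) * α + θ⌋ = 1 := by
  have e : ((n + 1 : ℤ) : ℝ) * α + θ = (⌊(n : ℝ) * α + θ⌋ : ℤ) + (Int.fract (n * α + θ) + α) := by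
    have := Int.floor_add_fract ((n : ℝ) * α + θ)
    push_cast
    linarith
  rw [e, Int.floor_intCast_add, add_sub_cancel_left, Int.floor_eq_iff, sturmian]
  have := Int.fract_lt_one ((n : ℝ) * α + θ)
  split_ifs with h
  · simp; constructor <;> linarith
  · simp; intro h2; linarith

lemma sturmian_congr {α : ℝ} (h1 : α < 1) {θ θ' : ℝ} {n n' : ℤ}
    (h : ⌊((n + 1 : ℤ) : ℝ) * α + θ⌋ - ⌊(n : ℝ) * α + θ⌋ =
      ⌊((n' + 1 : ℤ) : ℝ) * α + θ'⌋ - ⌊(n' : ℝ) * α + θ'⌋) :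
    sturmian α θ n = sturmian α θ' n' := by
  rw [Bool.eq_iff_iff, sturmian_iff h1, sturmian_iff h1, h]

/-- The site `t` is a hit for the approximant `p / q` if adding `q α - p` to `t α + θ` crosses an
integer. -/
def Hit (α θ : ℝ) (q : ℕ) (p : ℤ) (t : ℤ) : Prop :=
  ⌊((t + q : ℤ) : ℝ) * α + θ⌋ - p ≠ ⌊(t : ℝ) * α + θ⌋

/-- Away from hits the potential is `q`-periodic. -/
lemma sturmian_period {α θ : ℝ} (h1 : α < 1) {q : ℕ} {p t : ℤ}
    (ht : ¬ Hit α θ q p t) (ht' : ¬ Hit α θ q p (t + 1)) :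
    sturmian α θ (t + q) = sturmian α θ t := by
  apply sturmian_congr h1
  rw [Hit, not_not] at ht ht'
  rw [← ht, ← ht', show t + 1 + (q : ℤ) = t + q + 1 by ring]
  ring

namespace Conv

variable {α : ℝ} {a q : ℕ → ℕ} {p : ℕ → ℤ} {d : ℕ → ℝ} {θ : ℝ}

lemma hit_even (H : Conv α a q p d) {n : ℕ} (hn : Even n) (t : ℤ) :
    Hit α θ (q n) (p n) t ↔ ∃ k : ℤ, -d n ≤ t * α + θ - k ∧ t * α + θ - k < 0 := by
  have e : ((t + q n : ℤ) : ℝ) * α + θ = (t * α + θ + d n) + (p n : ℤ) := by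
    have := H.d_eq n
    rw [hn.neg_one_pow] at this
    push_cast
    linarith
  rw [Hit, e, Int.floor_add_intCast, add_sub_cancel_right]
  have hd := H.d_pos n
  constructor
  · intro h
    have h1 : ⌊(t : ℝ) * α + θ⌋ < ⌊(t : ℝ) * α + θ + d n⌋ :=
      lt_of_le_of_ne (Int.floor_le_floor (by linarith)) (Ne.symm h)
    refine ⟨⌊(t : ℝ) * α + θ⌋ + 1, ?_, ?_⟩
    · have := Int.le_floor.mp (Int.add_one_le_of_lt h1)
      linarith
    · have := Int.lt_floor_add_one ((t : ℝ) * α + θ)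
      push_cast
      linarith
  · rintro ⟨k, hk1, hk2⟩
    have h1 : ⌊(t : ℝ) * α + θ⌋ < k := Int.floor_lt.mpr (by linarith)
    have h2 : k ≤ ⌊(t : ℝ) * α + θ + d n⌋ := Int.le_floor.mpr (by linarith)
    omega

lemma hit_odd (H : Conv α a q p d) {n : ℕ} (hn : Odd n) (t : ℤ) :
    Hit α θ (q n) (p n) t ↔ ∃ k : ℤ, 0 ≤ t * α + θ - k ∧ t * α + θ - k < d n := by
  have e : ((t + q n : ℤ) : ℝ) * α + θ = (t * α + θ - d n) + (p n : ℤ) := by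
    have := H.d_eq n
    rw [hn.neg_one_pow] at this
    push_cast
    linarith
  rw [Hit, e, Int.floor_add_intCast, add_sub_cancel_right]
  have hd := H.d_pos n
  constructor
  · intro h
    have h1 : ⌊(t : ℝ) * α + θ - d n⌋ < ⌊(t : ℝ) * α + θ⌋ :=
      lt_of_le_of_ne (Int.floor_le_floor (by linarith)) h
    refine ⟨⌊(t : ℝ) * α + θ⌋, ?_, ?_⟩
    · linarith [Int.floor_le ((t : ℝ) * α + θ)]
    · have := Int.floor_lt.mp h1
      linarith
  · rintro ⟨k, hk1, hk2⟩
    have h1 : ⌊(t : ℝ) * α + θ - d n⌋ < k := Int.floor_lt.mpr (by linarith)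
    have h2 : k ≤ ⌊(t : ℝ) * α + θ⌋ := Int.le_floor.mpr (by linarith)
    omega

lemma hit_abs (H : Conv α a q p d) {n : ℕ} {t : ℤ} (h : Hit α θ (q n) (p n) t) :
    ∃ k : ℤ, |t * α + θ - k| ≤ d n := by
  have hd := H.d_pos n
  rcases Nat.even_or_odd n with hn | hn
  · obtain ⟨k, h1, h2⟩ := (H.hit_even hn t).mp h
    exact ⟨k, abs_le.mpr ⟨h1, by linarith⟩⟩
  · obtain ⟨k, h1, h2⟩ := (H.hit_odd hn t).mp h
    exact ⟨k, abs_le.mpr ⟨by linarith, h2.le⟩⟩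

/-- Distinct hits are at least `q (n+1)` apart. -/
lemma hit_gap (H : Conv α a q p d) {n : ℕ} {t t' : ℤ} (h : Hit α θ (q n) (p n) t)
    (h' : Hit α θ (q n) (p n) t') (hlt : t < t') : t + q (n + 1) ≤ t' := by
  have key : ∃ r : ℤ, |((t' - t : ℤ) : ℝ) * α - r| < d n := by
    rcases Nat.even_or_odd n with hn | hn
    · obtain ⟨k, h1, h2⟩ := (H.hit_even hn t).mp h
      obtain ⟨k', h1', h2'⟩ := (H.hit_even hn t').mp h'
      refine ⟨k' - k, ?_⟩
      push_cast
      rw [abs_lt]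
      constructor <;> linarith
    · obtain ⟨k, h1, h2⟩ := (H.hit_odd hn t).mp h
      obtain ⟨k', h1', h2'⟩ := (H.hit_odd hn t').mp h'
      refine ⟨k' - k, ?_⟩
      push_cast
      rw [abs_lt]
      constructor <;> linarith
  obtain ⟨r, hr⟩ := key
  by_contra! hc
  have := H.best (n := n) (k := t' - t) (by omega) (by omega) r
  linarith

/-- A hit at level `n + 1` generates two hits at level `n`. -/
lemma hit_down (H : Conv α a q p d) {n : ℕ} {t : ℤ} (h : Hit α θ (q (n + 1)) (p (n + 1)) t) :
    Hit α θ (q n) (p n) (t - q n) ∧ Hit α θ (q n) (p n) (t + q (n + 1)) := by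
  have hd := H.d_pos n
  have hd1 := H.d_pos (n + 1)
  have hlt := H.d_lt n
  have e1 := H.d_eq n
  have e2 := H.d_eq (n + 1)
  rcases Nat.even_or_odd n with hn | hn
  · have hn' : Odd (n + 1) := hn.add_one
    rw [hn.neg_one_pow] at e1
    rw [hn'.neg_one_pow] at e2
    obtain ⟨k, h1, h2⟩ := (H.hit_odd hn' t).mp h
    refine ⟨(H.hit_even hn _).mpr ⟨k - p n, ?_⟩, (H.hit_even hn _).mpr ⟨k + p (n + 1), ?_⟩⟩ <;>
      push_cast <;> constructor <;> linarith
  · have hn' : Even (n + 1) := hn.add_one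
    rw [hn.neg_one_pow] at e1
    rw [hn'.neg_one_pow] at e2
    obtain ⟨k, h1, h2⟩ := (H.hit_even hn' t).mp h
    refine ⟨(H.hit_odd hn _).mpr ⟨k - p n, ?_⟩, (H.hit_odd hn _).mpr ⟨k + p (n + 1), ?_⟩⟩ <;>
      push_cast <;> constructor <;> linarith

/-- Hits exist arbitrarily far to the left: stepping by `q n` moves the phase by `± d n`, which is
the length of the half-open interval to be met. -/
lemma exists_hit (H : Conv α a q p d) (n : ℕ) (b : ℤ) :
    ∃ t : ℤ, t < b ∧ Hit α θ (q n) (p n) t := by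
  have hd := H.d_pos n
  have e1 := H.d_eq n
  set y : ℝ := ((b - 1 : ℤ) : ℝ) * α + θ with hy
  have hlt : ∀ i : ℕ, b - 1 - i * (q n : ℤ) < b := by
    intro i
    have : (0 : ℤ) ≤ i * (q n : ℤ) := by positivity
    linarith
  rcases Nat.even_or_odd n with hn | hn
  · rw [hn.neg_one_pow] at e1
    have hk : 0 ≤ (y - ⌊y⌋) / d n := div_nonneg (by linarith [Int.floor_le y]) hd.le
    obtain ⟨i, hi⟩ : ∃ i : ℕ, i = ⌊(y - ⌊y⌋) / d n⌋₊ := ⟨_, rfl⟩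
    have h1 : (i : ℝ) * d n ≤ y - ⌊y⌋ := by
      rw [← le_div_iff₀ hd, hi]; exact Nat.floor_le hk
    have h2 : y - ⌊y⌋ < ((i : ℝ) + 1) * d n := by
      rw [← div_lt_iff₀ hd, hi]; exact Nat.lt_floor_add_one _
    refine ⟨b - 1 - (i + 1 : ℕ) * (q n : ℤ), hlt _,
      (H.hit_even hn _).mpr ⟨⌊y⌋ - (i + 1) * p n, ?_⟩⟩
    have e : ((b - 1 - (i + 1 : ℕ) * (q n : ℤ) : ℤ) : ℝ) * α + θ
        - ((⌊y⌋ - (i + 1) * p n : ℤ) : ℝ) = y - ⌊y⌋ - (i + 1) * d n := by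
      rw [hy]
      push_cast
      linear_combination (-(i + 1 : ℝ)) * e1
    rw [e]
    constructor <;> linarith
  · rw [hn.neg_one_pow] at e1
    have hk : 0 ≤ (⌈y⌉ - y) / d n := div_nonneg (by linarith [Int.le_ceil y]) hd.le
    obtain ⟨i, hi⟩ : ∃ i : ℕ, i = ⌈(⌈y⌉ - y) / d n⌉₊ := ⟨_, rfl⟩
    have h1 : ⌈y⌉ - y ≤ (i : ℝ) * d n := by
      rw [← div_le_iff₀ hd, hi]; exact Nat.le_ceil _
    have h2 : ((i : ℝ) - 1) * d n < ⌈y⌉ - y := by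
      rw [← lt_div_iff₀ hd, hi]
      linarith [Nat.ceil_lt_add_one hk]
    refine ⟨b - 1 - (i : ℕ) * (q n : ℤ), hlt _,
      (H.hit_odd hn _).mpr ⟨⌈y⌉ - i * p n, ?_⟩⟩
    have e : ((b - 1 - (i : ℕ) * (q n : ℤ) : ℤ) : ℝ) * α + θ
        - ((⌈y⌉ - i * p n : ℤ) : ℝ) = y - ⌈y⌉ + i * d n := by
      rw [hy]
      push_cast
      linear_combination (-(i : ℝ)) * e1
    rw [e]
    constructor <;> linarith

lemma not_hit_zero (H : Conv α a q p d) {n : ℕ} {t : ℤ} (h0 : 0 < t) (ht : t < q (n + 1)) :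
    ¬ Hit α 0 (q n) (p n) t := by
  intro h
  have hd := H.d_pos n
  rcases Nat.even_or_odd n with hn | hn
  · obtain ⟨k, h1, h2⟩ := (H.hit_even hn t).mp h
    have h3 := H.best h0 ht k
    have e := H.d_eq n
    rw [hn.neg_one_pow] at e
    rw [abs_of_neg (by linarith)] at h3
    -- equality is excluded because it would make `(t + q n) α` an integer
    have h4 : ((t + q n : ℤ) : ℝ) * α = (k + p n : ℤ) := by
      push_cast
      linarith
    have h5 : Irrational (((t + q n : ℤ) : ℝ) * α) :=
      H.irr.intCast_mul (by have := H.q_pos n; omega)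
    exact h5.ne_int _ h4
  · obtain ⟨k, h1, h2⟩ := (H.hit_odd hn t).mp h
    have h3 := H.best h0 ht k
    rw [abs_of_nonneg (by linarith)] at h3
    linarith

/-- To the right of a hit the potential starts like the one with phase zero. -/
lemma hit_word (H : Conv α a q p d) (h1 : α < 1) {n : ℕ} {t : ℤ}
    (h : Hit α θ (q n) (p n) t) {j : ℤ} (hj : 0 < j) (hj' : j + 1 < q (n + 1)) :
    sturmian α θ (t + j) = sturmian α 0 j := by
  have key : ∃ k : ℤ, ∀ i : ℤ, 0 < i → i < q (n + 1) →
      ⌊((t + i : ℤ) : ℝ) * α + θ⌋ = ⌊(i : ℝ) * α + 0⌋ + k := by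
    have hd := H.d_pos n
    rcases Nat.even_or_odd n with hn | hn
    · obtain ⟨k, h1, h2⟩ := (H.hit_even hn t).mp h
      refine ⟨k, fun i hi hi' => ?_⟩
      have hf := Int.floor_le ((i : ℝ) * α)
      have hf' := Int.lt_floor_add_one ((i : ℝ) * α)
      have hb := H.best hi hi' ⌊(i : ℝ) * α⌋
      rw [abs_of_nonneg (by linarith)] at hb
      rw [add_zero, Int.floor_eq_iff]
      push_cast
      constructor <;> linarith
    · obtain ⟨k, h1, h2⟩ := (H.hit_odd hn t).mp h
      refine ⟨k, fun i hi hi' => ?_⟩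
      have hf := Int.floor_le ((i : ℝ) * α)
      have hf' := Int.lt_floor_add_one ((i : ℝ) * α)
      have hb := H.best hi hi' (⌊(i : ℝ) * α⌋ + 1)
      push_cast at hb
      rw [abs_of_nonpos (by linarith)] at hb
      rw [add_zero, Int.floor_eq_iff]
      push_cast
      constructor <;> linarith
  obtain ⟨k, hk⟩ := key
  apply sturmian_congr h1
  rw [add_assoc, hk _ (by omega) hj', hk _ hj (by omega)]
  ring

end Conv

/-! ### Transfer matrices over one period -/

namespace Conv

variable {α : ℝ} {a q : ℕ → ℕ} {p : ℕ → ℤ} {d : ℕ → ℝ} {θ : ℝ}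

lemma two_le_q (H : Conv α a q p d) (n : ℕ) : 2 ≤ q (n + 2) := by
  have := H.le_q (n + 2)
  omega

/-- The trace over a window of length `q (n+1)` depends neither on the phase nor on the position of
the window, as long as the window does not start at a hit: it can be slid back, without meeting a
hit, to the site following the preceding hit, where the potential agrees with the one of phase
zero. -/
lemma trace_window (H : Conv α a q p d) (h1 : α < 1) (φ : Bool → ℂ) {n : ℕ}
    (hq : 2 ≤ q n) {b : ℤ} (hb : ¬ Hit α θ (q (n + 1)) (p (n + 1)) b) :
    (tm (fun m => φ (sturmian α θ m)) b (q (n + 1))).trace =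
      (tm (fun m => φ (sturmian α 0 m)) 1 (q (n + 1))).trace := by
  obtain ⟨t₀, ht₀, hit₀⟩ := H.exists_hit (θ := θ) (n + 1) b
  obtain ⟨t, ⟨htb, ht⟩, hmax⟩ := Int.exists_greatest_of_bdd
    (P := fun t => t < b ∧ Hit α θ (q (n + 1)) (p (n + 1)) t)
    ⟨b, fun z hz => hz.1.le⟩ ⟨t₀, ht₀, hit₀⟩
  have hno : ∀ s, t < s → s ≤ b → ¬ Hit α θ (q (n + 1)) (p (n + 1)) s := by
    intro s hs hsb hh
    rcases hsb.lt_or_eq with hlt | rfl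
    · have := hmax s ⟨hlt, hh⟩
      omega
    · exact hb hh
  have hgap : q (n + 1) + q n ≤ q (n + 1 + 1) := H.q_add_le n
  have hslide : ∀ i : ℕ, t + 1 + i ≤ b →
      (tm (fun m => φ (sturmian α θ m)) (t + 1 + i) (q (n + 1))).trace =
        (tm (fun m => φ (sturmian α 0 m)) 1 (q (n + 1))).trace := by
    intro i
    induction i with
    | zero =>
      intro _
      congr 1
      apply tm_congr
      intro i hi
      rw [← H.hit_word h1 ht (j := 1 + i) (by omega) (by omega)]
      congr 2
      push_cast
      ring
    | succ i ih =>
      intro hi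
      push_cast at hi ⊢
      rw [← ih (by omega), ← add_assoc]
      apply tm_trace_shift
      rw [sturmian_period h1 (hno _ (by omega) (by omega)) (hno _ (by omega) (by omega))]
  have := hslide (b - (t + 1)).toNat (by omega)
  rwa [show t + 1 + ((b - (t + 1)).toNat : ℤ) = b by omega] at this

/-- The matrices of phase zero obey the recursion of the standard words
`s (n+2) = s (n+1) ^ a n * s n`. -/
lemma tm_rec (H : Conv α a q p d) (h1 : α < 1) (φ : Bool → ℂ) {n : ℕ}
    (hq : 2 ≤ q (n + 1)) :
    tm (fun m => φ (sturmian α 0 m)) 1 (q (n + 2)) =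
      tm (fun m => φ (sturmian α 0 m)) 1 (q n) *
        tm (fun m => φ (sturmian α 0 m)) 1 (q (n + 1)) ^ a n := by
  set f : ℤ → ℂ := fun m => φ (sturmian α 0 m) with hf
  have hper : ∀ (i : ℕ) (j : ℤ), 0 < j → j + i * q (n + 1) + 1 < q (n + 2) + q (n + 1) →
      f (j + i * q (n + 1)) = f j := by
    intro i
    induction i with
    | zero => intro j _ _; simp
    | succ i ih =>
      intro j hj hlt
      push_cast at hlt ⊢
      have hz : (0 : ℤ) ≤ i * q (n + 1) := by positivity
      have hlt' : j + i * q (n + 1) + 1 < q (n + 2) := by linarith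
      rw [← ih j hj (by omega)]
      rw [show j + ((i : ℤ) + 1) * q (n + 1) = j + i * q (n + 1) + q (n + 1) by ring]
      simp only [hf]
      rw [sturmian_period h1 (H.not_hit_zero (n := n + 1) (by omega) (hlt'.trans' (by omega)))
        (H.not_hit_zero (n := n + 1) (by omega) hlt')]
  have hrec : (q (n + 2) : ℤ) = a n * q (n + 1) + q n := by exact_mod_cast H.q_rec n
  have hpow : ∀ i : ℕ, i ≤ a n → tm f 1 (i * q (n + 1)) = tm f 1 (q (n + 1)) ^ i := by
    intro i
    induction i with
    | zero => intro _; simp [tm]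
    | succ i ih =>
      intro hi
      rw [Nat.succ_mul, tm_add, ih (by omega), pow_succ']
      congr 1
      apply tm_congr
      intro k hk
      have hle : ((i : ℤ) + 1) * q (n + 1) ≤ a n * q (n + 1) := by
        have : (i : ℤ) + 1 ≤ a n := by exact_mod_cast hi
        gcongr
      have hqn := H.q_pos n
      rw [← hper i (1 + k) (by omega) (by nlinarith)]
      push_cast
      congr 1
      ring
  rw [show q (n + 2) = a n * q (n + 1) + q n from H.q_rec n, tm_add, hpow _ le_rfl]
  congr 1
  apply tm_congr
  intro k hk
  rw [← hper (a n) (1 + k) (by omega) (by omega)]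
  push_cast
  congr 1
  ring

end Conv

/-- Traces at an eigenvalue stay bounded. Otherwise they escape, hence (openness) they escape for
all energies near the eigenvalue, contradicting that such energies occur in the spectra of the
periodic approximants of arbitrarily long period. -/
lemma trace_bounded_of_eigenvalue {α : ℝ} {a q : ℕ → ℕ} {p : ℕ → ℤ} {d : ℕ → ℝ} {θ : ℝ}
    (H : Conv α a q p d) (h1 : α < 1) (W : Bool → ℝ) {E : ℂ} {u : ℤ → ℂ}
    (hu : Summable fun n : ℤ => ‖u n‖ ^ 2)
    (heq : ∀ n, u (n + 1) + u (n - 1) = (E - W (sturmian α θ n)) * u n) (hne : u ≠ 0) :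
    ∃ C : ℝ, ∀ n, ‖(tm (fun m => E - W (sturmian α 0 m)) 1 (q (n + 2))).trace‖ ≤ C := by
  set M : ℂ → ℕ → Matrix (Fin 2) (Fin 2) ℂ :=
    fun x n => tm (fun m => x - W (sturmian α 0 m)) 1 (q (n + 2)) with hMdef
  have hdet : ∀ x n, (M x n).det = 1 := fun x n => tm_det _ _ _
  have hM : ∀ x n, M x (n + 2) = M x n * M x (n + 1) ^ ((a (n + 2) - 1) + 1) := by
    intro x n
    rw [Nat.sub_add_cancel (H.a_pos _)]
    exact H.tm_rec h1 (fun b => x - W b) (H.two_le_q (n + 1))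
  refine trace_bounded (hdet E) (hM E) fun k hk => ?_
  have hc : ∀ n, Continuous fun x => M x n := fun n =>
    tm_continuous (fun m => continuous_id.sub continuous_const) _ _
  have hc' : ∀ n, Continuous fun x => ‖(M x n).trace‖ := fun n => (hc n).matrix_trace.norm
  have hc2 : Continuous fun x => ‖(M x k * M x (k + 1)).trace‖ :=
    ((hc k).matrix_mul (hc (k + 1))).matrix_trace.norm
  have hopen : IsOpen {x | Escapes (M x) k} :=
    (isOpen_lt continuous_const (hc' k)).inter <|
      (isOpen_lt continuous_const (hc' (k + 1))).inter <|
        (isOpen_lt (hc' k) hc2).inter (isOpen_lt (hc' (k + 1)) hc2)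
  obtain ⟨ε, hε, hball⟩ := Metric.isOpen_iff.mp hopen E hk
  obtain ⟨N, hN⟩ := exists_energy_near (V := fun n => W (sturmian α θ n)) hu heq hne hε
  -- a level with period exceeding `2 * N`, and a starting point that is not a hit
  obtain ⟨m, hm⟩ : ∃ m, m = k + (2 * N + 1) := ⟨_, rfl⟩
  have hq := H.le_q (m + 2)
  obtain ⟨b, hbN, hbq, hb⟩ : ∃ b : ℤ, b ≤ -N ∧ N ≤ b + q (m + 2) ∧
      ¬ Hit α θ (q (m + 2)) (p (m + 2)) b := by
    by_cases hh : Hit α θ (q (m + 2)) (p (m + 2)) (-N - 1)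
    · refine ⟨-N, le_rfl, by omega, fun hh' => ?_⟩
      have h3 := H.hit_gap hh hh' (by omega)
      have h4 := H.two_le_q (m + 1)
      change 2 ≤ q (m + 2 + 1) at h4
      omega
    · exact ⟨-N - 1, by omega, by omega, hh⟩
  obtain ⟨μ, hμ, htr⟩ := hN b _ hbN hbq
  have hesc : Escapes (M μ) k := hball (by rwa [Metric.mem_ball, dist_eq_norm])
  have h2 := hesc.two_lt (hdet μ) (hM μ) (2 * N + 1)
  rw [← hm] at h2
  have hqm : 2 ≤ q (m + 1) := by
    obtain ⟨m', rfl⟩ : ∃ m', m = m' + 1 := ⟨k + 2 * N, by omega⟩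
    exact H.two_le_q m'
  have h3 := H.trace_window h1 (fun b => μ - W b) hqm hb
  rw [htr] at h3
  simp only [hMdef] at h2
  rw [← h3] at h2
  norm_num at h2

/-! ### Levels at which the potential repeats a block next to a given site -/

/-- No hit of level `n` obstructs the repetition of a block of length `q n` either to the right of
`c` or to the left of `c`. -/
def Good (α θ : ℝ) (q : ℕ) (p : ℤ) (c : ℤ) : Prop :=
  (∀ s, c ≤ s → s ≤ c + q → ¬ Hit α θ q p s) ∨
    (∀ s, c - 2 * q ≤ s → s ≤ c - q → ¬ Hit α θ q p s)

namespace Conv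

variable {α : ℝ} {a q : ℕ → ℕ} {p : ℕ → ℤ} {d : ℕ → ℝ} {θ : ℝ}

lemma good_of_three_le (H : Conv α a q p d) {n : ℕ} (hn : 3 ≤ a n) (c : ℤ) :
    Good α θ (q (n + 1)) (p (n + 1)) c := by
  by_contra hbad
  rw [Good, not_or] at hbad
  push Not at hbad
  obtain ⟨⟨t', h1, h2, ht'⟩, t, h3, h4, ht⟩ := hbad
  have hq1 := H.q_pos (n + 1)
  have hq0 := H.q_pos n
  have h5 : t + (q (n + 2) : ℤ) ≤ t' := H.hit_gap ht ht' (by omega)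
  have h6 := H.q_rec n
  have h7 := Nat.mul_le_mul_right (q (n + 1)) hn
  omega

/-- Two consecutive obstructed levels: the nearest hits on both sides of `c` at level `n` come from
those at level `n + 1`. -/
lemma hit_step (H : Conv α a q p d) {n : ℕ} {c t t' s s' : ℤ} (hq : 3 * q n < 2 * q (n + 1))
    (hc : ¬ Hit α θ (q n) (p n) c)
    (ht : Hit α θ (q n) (p n) t) (ht' : Hit α θ (q n) (p n) t')
    (hs : Hit α θ (q (n + 1)) (p (n + 1)) s) (hs' : Hit α θ (q (n + 1)) (p (n + 1)) s')
    (h1 : c - 2 * q n ≤ t) (h2 : t ≤ c - q n) (h3 : c < t') (h4 : t' ≤ c + q n)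
    (h5 : c - 2 * q (n + 1) ≤ s) (h6 : s ≤ c - q (n + 1)) (h7 : c < s')
    (h8 : s' ≤ c + q (n + 1)) :
    s = t - q (n + 1) ∧ s' = t' + q n := by
  have hr := (H.hit_down hs).2
  have hl := (H.hit_down hs').1
  have hq0 := H.q_pos n
  constructor
  · have hne : s + q (n + 1) ≠ c := fun h => hc (h ▸ hr)
    have g1 := H.hit_gap ht hr
    have g2 := H.hit_gap hr ht
    have g3 := H.hit_gap hr ht'
    omega
  · have g1 := H.hit_gap ht' hl
    have g2 := H.hit_gap hl ht'
    have g3 := H.hit_gap ht hl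
    omega

/-- If the partial quotients eventually equal one and `c` is eventually not a hit, then three
consecutive levels cannot all be bad: the distance between the hits on both sides of `c` would grow
too fast. -/
lemma good_of_one (H : Conv α a q p d) {n : ℕ} (ha : ∀ i, n ≤ i → a i = 1) {c : ℤ}
    (hc : ∀ i, n ≤ i → ¬ Hit α θ (q i) (p i) c) :
    ∃ m, n ≤ m ∧ Good α θ (q (m + 1)) (p (m + 1)) c := by
  by_contra! hbad
  have hrec : ∀ i, n ≤ i → q (i + 2) = q (i + 1) + q i := by
    intro i hi
    rw [H.q_rec, ha i hi, one_mul]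
  have key : ∀ m, n ≤ m → ∃ t t', Hit α θ (q (m + 1)) (p (m + 1)) t ∧
      Hit α θ (q (m + 1)) (p (m + 1)) t' ∧ c - 2 * q (m + 1) ≤ t ∧ t ≤ c - q (m + 1) ∧
      c < t' ∧ t' ≤ c + q (m + 1) := by
    intro m hm
    have hb := hbad m hm
    rw [Good, not_or] at hb
    push Not at hb
    obtain ⟨⟨t', h1, h2, ht'⟩, t, h3, h4, ht⟩ := hb
    exact ⟨t, t', ht, ht', h3, h4, lt_of_le_of_ne h1 fun h => hc (m + 1) (by omega) (h ▸ ht'), h2⟩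
  obtain ⟨t, t', ht, ht', h1, h2, h3, h4⟩ := key (n + 2) (by omega)
  obtain ⟨s, s', hs, hs', k1, k2, k3, k4⟩ := key (n + 3) (by omega)
  obtain ⟨r, r', hr, hr', l1, l2, l3, l4⟩ := key (n + 4) (by omega)
  have q0 := H.q_pos n
  have q1 := H.q_pos (n + 1)
  have q2 : q (n + 2) = q (n + 1) + q n := hrec n le_rfl
  have q3 : q (n + 3) = q (n + 2) + q (n + 1) := hrec (n + 1) (by omega)
  have q4 : q (n + 4) = q (n + 3) + q (n + 2) := hrec (n + 2) (by omega)
  have q5 : q (n + 5) = q (n + 4) + q (n + 3) := hrec (n + 3) (by omega)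
  have q6 : q (n + 6) = q (n + 5) + q (n + 4) := hrec (n + 4) (by omega)
  have e1 := H.hit_step (n := n + 3) (show 3 * q (n + 3) < 2 * q (n + 4) by omega)
    (hc _ (by omega)) ht ht' hs hs' h1 h2 h3 h4 k1 k2 k3 k4
  have e2 := H.hit_step (n := n + 4) (show 3 * q (n + 4) < 2 * q (n + 5) by omega)
    (hc _ (by omega)) hs hs' hr hr' k1 k2 k3 k4 l1 l2 l3 l4
  have e3 : t + (q (n + 4) : ℤ) ≤ t' := H.hit_gap ht ht' (by omega)
  simp only [add_assoc, Nat.reduceAdd] at *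
  omega

/-- Some site is eventually never a hit. -/
lemma exists_not_hit (H : Conv α a q p d) :
    ∃ (c : ℤ) (N : ℕ), ∀ n, N ≤ n → ¬ Hit α θ (q n) (p n) c := by
  obtain ⟨c, hc⟩ : ∃ c : ℤ, ∀ k : ℤ, (c : ℝ) * α + θ ≠ k := by
    by_contra! hcon
    obtain ⟨k, hk⟩ := hcon 0
    obtain ⟨l, hl⟩ := hcon 1
    apply H.irr.ne_int (l - k)
    push_cast at hk hl ⊢
    linarith
  set x : ℝ := (c : ℝ) * α + θ with hx
  have hδ : 0 < |x - round x| := abs_pos.mpr (sub_ne_zero.mpr (hc _))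
  obtain ⟨N, hN⟩ := exists_nat_one_div_lt hδ
  refine ⟨c, N, fun n hn hh => ?_⟩
  obtain ⟨k, hk⟩ := H.hit_abs hh
  have h1 := round_le x k
  have h2 := H.d_mul n
  have h3 : (N : ℝ) + 1 ≤ q (n + 1) := by
    have := H.le_q (n + 1)
    exact_mod_cast (by omega : N + 1 ≤ q (n + 1))
  have h4 : d n ≤ 1 / (N + 1) := by
    rw [le_div_iff₀ (by positivity)]
    exact (mul_le_mul_of_nonneg_left h3 (H.d_pos n).le).trans h2
  linarith

end Conv

/-! ### The two-block argument -/

lemma tendsto_zero_of_summable_sq {u : ℤ → ℂ} (hu : Summable fun n : ℤ => ‖u n‖ ^ 2) :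
    Filter.Tendsto (fun n => ‖u n‖) Filter.cofinite (nhds 0) := by
  have h := (Real.continuous_sqrt.tendsto 0).comp hu.tendsto_cofinite_zero
  simpa [Function.comp_def, Real.sqrt_sq (norm_nonneg _)] using h

lemma eq_zero_of_eq_zero {f u : ℤ → ℂ} (hu : ∀ n, u (n + 1) + u (n - 1) = f n * u n) {c : ℤ}
    (h0 : u c = 0) (h1 : u (c - 1) = 0) : u = 0 := by
  have hr : ∀ k : ℕ, u (c + k) = 0 ∧ u (c + k - 1) = 0 := by
    intro k
    induction k with
    | zero => simpa using ⟨h0, h1⟩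
    | succ k ih =>
      have := hu (c + k)
      rw [ih.1, ih.2] at this
      push_cast
      rw [← add_assoc, add_sub_cancel_right]
      exact ⟨by simpa using this, ih.1⟩
  have hl : ∀ k : ℕ, u (c - k) = 0 ∧ u (c - k - 1) = 0 := by
    intro k
    induction k with
    | zero => simpa using ⟨h0, h1⟩
    | succ k ih =>
      have := hu (c - k - 1)
      rw [sub_add_cancel, ih.1, ih.2] at this
      push_cast
      rw [← sub_sub]
      exact ⟨ih.2, by simpa using this⟩
  funext n
  rcases le_total c n with h | h
  · have := (hr (n - c).toNat).1
    rwa [show c + ((n - c).toNat : ℤ) = n by omega] at this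
  · have := (hl (c - n).toNat).1
    rwa [show c - ((c - n).toNat : ℤ) = n by omega] at this

/-- Gordon's argument: if a site `c` has infinitely many good levels, then a square-summable
solution with bounded traces vanishes at `c` and `c - 1`, hence everywhere. -/
lemma eq_zero_of_frequently_good {α : ℝ} {a q : ℕ → ℕ} {p : ℕ → ℤ} {d : ℕ → ℝ} {θ : ℝ}
    (H : Conv α a q p d) (h1 : α < 1) (W : Bool → ℝ) {E : ℂ} {u : ℤ → ℂ}
    (hu : Summable fun n : ℤ => ‖u n‖ ^ 2)
    (heq : ∀ n, u (n + 1) + u (n - 1) = (E - W (sturmian α θ n)) * u n) {c : ℤ}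
    (hgood : ∃ᶠ n in Filter.atTop, Good α θ (q n) (p n) c) : u = 0 := by
  by_contra hne
  obtain ⟨C, hC⟩ := trace_bounded_of_eigenvalue H h1 W hu heq hne
  have hC0 : 0 ≤ C := (norm_nonneg _).trans (hC 0)
  have htr : ∀ n (b : ℤ), 3 ≤ n → ¬ Hit α θ (q n) (p n) b →
      ‖(tm (fun m => E - W (sturmian α θ m)) b (q n)).trace‖ ≤ C := by
    intro n b hn hb
    obtain ⟨m, rfl⟩ : ∃ m, n = m + 3 := ⟨n - 3, by omega⟩
    have h := H.trace_window h1 (fun b => (E - W b : ℂ)) (n := m + 2) (H.two_le_q m) hb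
    rw [h]
    exact hC (m + 1)
  have hper : ∀ n (b : ℤ), (∀ s, b ≤ s → s ≤ b + q n → ¬ Hit α θ (q n) (p n) s) →
      ∀ i : ℕ, i < q n → (E - W (sturmian α θ (b + q n + i)) : ℂ) = E - W (sturmian α θ (b + i)) := by
    intro n b hb i hi
    rw [add_right_comm, sturmian_period h1 (hb _ (by omega) (by omega))
      (hb _ (by omega) (by omega))]
  -- the bound `‖u x‖ ≤ R x n` at good levels, for `x = c` and `x = c - 1`
  set R : ℤ → ℕ → ℝ := fun x n => C * (‖u (x + q n)‖ + ‖u (x - q n)‖) +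
    (‖u (x + 2 * q n)‖ + ‖u (x - 2 * q n)‖) with hR
  have hbound : ∀ n, 3 ≤ n → Good α θ (q n) (p n) c →
      ‖u c‖ ≤ R c n ∧ ‖u (c - 1)‖ ≤ R (c - 1) n := by
    have aux : ∀ (x y z w v T : ℂ), ‖T‖ ≤ C → x = T * y - z →
        ‖x‖ ≤ C * (‖y‖ + ‖w‖) + (‖z‖ + ‖v‖) ∧ ‖x‖ ≤ C * (‖w‖ + ‖y‖) + (‖v‖ + ‖z‖) := by
      intro x y z w v T hT hx
      have h2 : ‖x‖ ≤ ‖T‖ * ‖y‖ + ‖z‖ := by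
        rw [hx, ← norm_mul]
        exact norm_sub_le _ _
      have h3 : ‖T‖ * ‖y‖ ≤ C * ‖y‖ := by gcongr
      have h4 : 0 ≤ C * ‖w‖ := by positivity
      have h5 := norm_nonneg v
      constructor <;> linarith
    intro n hn hg
    rcases hg with hg | hg
    · have hT := htr n c hn (hg c le_rfl (by omega))
      obtain ⟨e1, e2⟩ := two_block heq (hper n c hg)
      refine ⟨(aux _ _ _ _ _ _ hT (eq_sub_of_add_eq' e1)).1, ?_⟩
      have := (aux _ _ _ (u (c - 1 - q n)) (u (c - 1 - 2 * q n)) _ hT (eq_sub_of_add_eq' e2)).1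
      rwa [add_sub_right_comm, add_sub_right_comm] at this
    · have hT := htr n (c - 2 * q n) hn (hg _ le_rfl (by omega))
      obtain ⟨e1, e2⟩ := two_block heq
        (hper n (c - 2 * q n) fun s hs hs' => hg s hs (by omega))
      rw [sub_add_cancel, show c - 2 * (q n : ℤ) + q n = c - q n by ring] at e1 e2
      refine ⟨(aux _ _ _ _ _ _ hT (eq_sub_of_add_eq e1)).2, ?_⟩
      have := (aux _ _ _ (u (c - 1 + q n)) (u (c - 1 + 2 * q n)) _ hT (eq_sub_of_add_eq e2)).2
      rwa [sub_right_comm, sub_right_comm c (2 * (q n : ℤ))] at this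
  have hq : Filter.Tendsto (fun n => (q n : ℤ)) Filter.atTop Filter.atTop :=
    Filter.tendsto_atTop_mono (fun n => by exact_mod_cast H.le_q n) tendsto_natCast_atTop_atTop
  have hq2 : Filter.Tendsto (fun n => 2 * (q n : ℤ)) Filter.atTop Filter.atTop :=
    Filter.tendsto_atTop_mono (fun n => by omega) hq
  have hu0 := tendsto_zero_of_summable_sq hu
  rw [Int.cofinite_eq, Filter.tendsto_sup] at hu0
  have hRlim : ∀ x, Filter.Tendsto (R x) Filter.atTop (nhds 0) := by
    intro x
    have l1 := hu0.2.comp (Filter.tendsto_atTop_add_const_left _ x hq)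
    have l2 := hu0.2.comp (Filter.tendsto_atTop_add_const_left _ x hq2)
    have l3 := hu0.1.comp (Filter.tendsto_atBot_add_const_left _ x
      (Filter.tendsto_neg_atTop_atBot.comp hq))
    have l4 := hu0.1.comp (Filter.tendsto_atBot_add_const_left _ x
      (Filter.tendsto_neg_atTop_atBot.comp hq2))
    simpa [hR, Function.comp_def, sub_eq_add_neg] using
      ((l1.add l3).const_mul C).add (l2.add l4)
  have hfreq := hgood.and_eventually (Filter.eventually_ge_atTop 3)
  have hz : ‖u c‖ ≤ 0 := ge_of_tendsto_of_frequently (hRlim c)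
    (hfreq.mono fun n hn => (hbound n hn.2 hn.1).1)
  have hw : ‖u (c - 1)‖ ≤ 0 := ge_of_tendsto_of_frequently (hRlim (c - 1))
    (hfreq.mono fun n hn => (hbound n hn.2 hn.1).2)
  exact hne (eq_zero_of_eq_zero heq (norm_le_zero_iff.mp hz) (norm_le_zero_iff.mp hw))

/-- A limsup different from two splits the problem: partial quotients at least three occur
infinitely often, or all partial quotients are eventually one. -/
lemma limsup_split {α : ℝ} (h0 : 0 < α) (h1 : α < 1) (hirr : Irrational α)
    (hlim : Filter.atTop.limsup (fun n : ℕ => (cfa α n : ℕ∞)) ≠ 2) :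
    (∃ᶠ n in Filter.atTop, 3 ≤ cfa α (n + 2)) ∨ ∃ N, ∀ n, N ≤ n → cfa α (n + 2) = 1 := by
  by_cases h3 : ∃ᶠ n in Filter.atTop, 3 ≤ cfa α n
  · left
    rw [Filter.frequently_atTop] at h3 ⊢
    intro n
    obtain ⟨m, hm, hm3⟩ := h3 (n + 2)
    exact ⟨m - 2, by omega, by rwa [Nat.sub_add_cancel (by omega)]⟩
  · right
    rw [Filter.not_frequently] at h3
    have hle : Filter.atTop.limsup (fun n : ℕ => (cfa α n : ℕ∞)) ≤ 2 := by
      refine Filter.limsup_le_of_le (by isBoundedDefault) (h3.mono fun n hn => ?_)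
      exact_mod_cast (by omega : cfa α n ≤ 2)
    have hlt := Filter.eventually_lt_of_limsup_lt (lt_of_le_of_ne hle hlim)
    obtain ⟨N, hN⟩ := Filter.eventually_atTop.mp hlt
    refine ⟨N, fun n hn => ?_⟩
    have h4 : cfa α (n + 2) < 2 := by exact_mod_cast hN (n + 2) (by omega)
    have h5 := cfa_pos h0 h1 hirr (n + 1)
    change 1 ≤ cfa α (n + 2) at h5
    omega

/-- Absence of eigenvalues for Sturmian Schrödinger operators when
`limsup aₙ ≠ 2`: every square-summable solution of `H_{λ,α,θ} u = E u` vanishes. -/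
theorem absence_of_eigenvalues_limsup_ne_two
    (α : ℝ) (hα0 : 0 < α) (hα1 : α < 1) (hirr : Irrational α)
    (hlim : Filter.atTop.limsup (fun n : ℕ => (cfa α n : ℕ∞)) ≠ 2)
    (lam : ℝ) (hlam : lam ≠ 0) (θ : ℝ) (hθ0 : 0 ≤ θ) (hθ1 : θ < 1)
    (E : ℂ) (u : ℤ → ℂ)
    (hu : Summable fun n : ℤ => ‖u n‖ ^ 2)
    (heq : ∀ n : ℤ, u (n + 1) + u (n - 1)
      + (lam : ℂ) * (if sturmian α θ n then 1 else 0) * u n = E * u n) :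
    u = 0 := by
  have H := conv_cfa hα0 hα1 hirr
  set W : Bool → ℝ := fun b => lam * (if b then 1 else 0) with hW
  have heq' : ∀ n : ℤ, u (n + 1) + u (n - 1) = (E - W (sturmian α θ n)) * u n := by
    intro n
    have h := heq n
    simp only [hW]
    split_ifs at h ⊢ <;> push_cast <;> linear_combination h
  rcases limsup_split hα0 hα1 hirr hlim with h | ⟨N, hN⟩
  · refine eq_zero_of_frequently_good H hα1 W hu heq' (c := 0) ?_
    rw [Filter.frequently_atTop] at h ⊢
    intro n
    obtain ⟨m, hm, hm3⟩ := h n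
    exact ⟨m + 1, by omega, H.good_of_three_le hm3 0⟩
  · obtain ⟨c, N', hc⟩ := H.exists_not_hit (θ := θ)
    refine eq_zero_of_frequently_good H hα1 W hu heq' (c := c) ?_
    rw [Filter.frequently_atTop]
    intro n
    obtain ⟨m, hm, hg⟩ := H.good_of_one (θ := θ) (n := max n (max N N'))
      (fun i hi => hN i (by omega)) (c := c) (fun i hi => hc i (by omega))
    exact ⟨m + 1, by omega, hg⟩
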